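/- Let A ⊊ G_n be non-empty and x ∈ G_n. Then P^{G_n}-almost surely, Var_{P^{G_n}}( Ψ_{G_n}(x) | σ(Ψ_{G_n}(y), y ∈ A) ) = G_{G_n}(x,x) − E_x^{G_n}[ G_{G_n}(X_{H_A}, x) ] + (E_x^{G_n}[H_A] / E_π^{G_n}[H_A]) · E_π^{G_n}[ G_{G_n}(X_{H_A}, x) ], where E_π^{G_n} is the expectation for simple random walk on G_n started from the uniform distribution on the vertices of G_n. -/

import Mathlib

open MeasureTheory ProbabilityTheory Filter Set
open scoped ENNReal NNReal ENat Classical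

namespace GFF

variable {V : Type*} {T : Type*}

/-- Number of ordered adjacent pairs inside `U` (twice the number of edges of the induced
subgraph). -/
noncomputable def adjPairs (G : SimpleGraph V) (U : Set V) : ℕ :=
  Set.ncard {p : V × V | p.1 ∈ U ∧ p.2 ∈ U ∧ G.Adj p.1 p.2}

/-- `U` (assumed connected) induces a tree, i.e. has tree excess zero. -/
def TxZero (G : SimpleGraph V) (U : Set V) : Prop :=
  adjPairs G U = 2 * (Set.ncard U - 1)

/-- Closed ball of radius `R` for the graph distance. -/
def gball (G : SimpleGraph V) (x : V) (R : ℕ) : Set V := {y | G.dist x y ≤ R}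

/-- Set of vertices within distance `R` of the set `A`. -/
def sball (G : SimpleGraph V) (A : Set V) (R : ℕ) : Set V := {y | ∃ a ∈ A, G.dist a y ≤ R}

/-- Connected component containing `x` of the level set `{ω ≥ h}`. -/
def levelComp (G : SimpleGraph V) (h : ℝ) (ω : V → ℝ) (x : V) : Set V :=
  {y | ∃ p : G.Walk x y, ∀ v ∈ p.support, h ≤ ω v}

/-- `G` is `d`-regular. -/
def IsReg (G : SimpleGraph V) (d : ℕ) : Prop := ∀ v, Nat.card (G.neighborSet v) = d

/-- `G` is an infinite `d`-regular tree. -/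
def IsRegTree (G : SimpleGraph V) (d : ℕ) : Prop :=
  G.Connected ∧ G.IsAcyclic ∧ IsReg G d

/-- Transition matrix of SRW on a `d`-regular graph. -/
noncomputable def transP [Fintype V] (G : SimpleGraph V) (d : ℕ) : Matrix V V ℝ :=
  Matrix.of fun u v => if G.Adj u v then ((d : ℝ))⁻¹ else 0

/-- All non-zero eigenvalues of `I - P` are at least `β`. -/
def SpectralGapLB [Fintype V] (G : SimpleGraph V) (d : ℕ) (β : ℝ) : Prop :=
  ∀ (f : V → ℝ) (lam : ℝ),
    Matrix.mulVec ((1 : Matrix V V ℝ) - transP G d) f = lam • f → f ≠ 0 → lam = 0 ∨ β ≤ lam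

/-- `P_x[X̄_t = y]` for the continuous-time SRW with i.i.d. mean-one exponential holding
times (Poissonized jump chain). -/
noncomputable def heatK [Fintype V] (G : SimpleGraph V) (d : ℕ) (t : ℝ) (x y : V) : ℝ :=
  ∑' k : ℕ, Real.exp (-t) * t ^ k / (Nat.factorial k) * ((transP G d) ^ k) x y

/-- The zero-average Green function. -/
noncomputable def zGreen [Fintype V] (G : SimpleGraph V) (d Nn : ℕ) (x y : V) : ℝ :=
  ∫ t in Set.Ioi (0 : ℝ), (heatK G d t x y - 1 / (Nn : ℝ))

/-- Green function of SRW on the `d`-regular tree. -/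
noncomputable def treeGreen (G : SimpleGraph V) (d : ℕ) (x y : V) : ℝ :=
  (((d : ℝ) - 1) / ((d : ℝ) - 2)) * (((d : ℝ) - 1)⁻¹) ^ (G.dist x y)

/-- `μ` is the law of the centred Gaussian field with covariance `K`. -/
def IsGaussianField {I : Type*} (μ : Measure (I → ℝ)) (K : I → I → ℝ) : Prop :=
  IsProbabilityMeasure μ ∧
    ∀ c : I →₀ ℝ,
      μ.map (fun ω => ∑ i ∈ c.support, c i * ω i) =
        gaussianReal 0 (Real.toNNReal (∑ i ∈ c.support, ∑ j ∈ c.support, c i * c j * K i j))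

/-- One-step transition probability of SRW. -/
noncomputable def srwStep (G : SimpleGraph V) (d : ℕ) (u v : V) : ℝ≥0∞ :=
  if G.Adj u v then (d : ℝ≥0∞)⁻¹ else 0

/-- `W x` is the law of discrete-time SRW on `G` started at `x`. -/
def IsSRW [MeasurableSpace V] (G : SimpleGraph V) (d : ℕ) (W : V → Measure (ℕ → V)) : Prop :=
  (∀ x, IsProbabilityMeasure (W x)) ∧
    ∀ (x : V) (k : ℕ) (p : ℕ → V),
      W x {ω | ∀ i ≤ k, ω i = p i} =
        (if p 0 = x then 1 else 0) * ∏ i ∈ Finset.range k, srwStep G d (p i) (p (i + 1))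

/-- Entrance time of the set `A` (`⊤` if never entered). -/
noncomputable def hitTime (A : Set V) (ω : ℕ → V) : ℕ∞ :=
  sInf ((Nat.cast : ℕ → ℕ∞) '' {k | ω k ∈ A})

/-- Exit time of the set `U`. -/
noncomputable def exitTime (U : Set V) (ω : ℕ → V) : ℕ∞ := hitTime Uᶜ ω

/-- Position of the walk at the entrance time of `A`. -/
noncomputable def stopAt (A : Set V) (ω : ℕ → V) : V := ω (hitTime A ω).toNat

/-- `π` is a cover tree of `G` at `x`. -/
def IsCoverMap (Gt : SimpleGraph T) (G : SimpleGraph V) (o : T) (x : V) (π : T → V) : Prop :=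
  π o = x ∧ Function.Surjective π ∧ ∀ y : T, π '' (Gt.neighborSet y) = G.neighborSet (π y)

/-- `T_d^+`: the vertices of the tree whose geodesic to `o` avoids the fixed neighbour
`obar` of `o`. -/
def treePlus (Gt : SimpleGraph T) (o obar : T) : Set T :=
  {z | Gt.dist z obar = Gt.dist z o + 1}

/-- `S^+_{T_d}(o,R)`. -/
def spherePlus (Gt : SimpleGraph T) (o obar : T) (R : ℕ) : Set T :=
  {z | z ∈ treePlus Gt o obar ∧ Gt.dist o z = R}

/-- The critical value for level-set percolation on the tree (w.r.t. the law `μT`). -/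
noncomputable def hstar (Gt : SimpleGraph T) (o : T) (μT : Measure (T → ℝ)) : ℝ :=
  sInf {h : ℝ | μT {ω | (levelComp Gt h ω o).Infinite} = 0}

/-- The forward percolation probability `η⁺(h)`. -/
noncomputable def etaPlus (Gt : SimpleGraph T) (o obar : T) (μT : Measure (T → ℝ)) (h : ℝ) :
    ℝ :=
  (μT {ω | (levelComp Gt h ω o ∩ treePlus Gt o obar).Infinite}).toReal

/-- `s_n`. -/
noncomputable def sn (d Nn : ℕ) : ℕ :=
  max 1 ⌊(8 : ℝ) * Real.logb ((d : ℝ) - 1) (Real.logb ((d : ℝ) - 1) (Nn : ℝ))⌋₊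

/-- `c₀ = αβ/(d-1)`. -/
noncomputable def c0 (d : ℕ) (α β : ℝ) : ℝ := α * β / ((d : ℝ) - 1)

/-- `r_n`. -/
noncomputable def rn (d : ℕ) (α β : ℝ) (Nn : ℕ) : ℕ :=
  max 1 ⌊(c0 d α β / 18) * Real.logb ((d : ℝ) - 1) (Nn : ℝ)⌋₊

/-- `R_n`. -/
noncomputable def Rn (d : ℕ) (α β : ℝ) (Nn : ℕ) : ℕ :=
  max 1 ⌊(c0 d α β / 6) * Real.logb ((d : ℝ) - 1) (Nn : ℝ)⌋₊

/-- `F_A(x,s)`: the vertices of `B(A,s) ∖ A` connected to `x` within `B(A,s) ∖ A`. -/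
def Fset (G : SimpleGraph V) (A : Set V) (s : ℕ) (x : V) : Set V :=
  {z | ∃ p : G.Walk x z, ∀ v ∈ p.support, v ∈ sball G A s ∧ v ∉ A}

/-- Good vertex at the boundary of `A`. -/
def GoodVertex (G : SimpleGraph V) (A : Set V) (s : ℕ) (x : V) : Prop :=
  x ∉ A ∧ (∃! y, y ∈ A ∧ G.Adj x y) ∧
    TxZero G (Fset G A s x) ∧
    ∀ y : V, y ∉ A → (∃ a ∈ A, G.Adj y a) → y ≠ x →
      ∀ p : G.Walk y x, (∀ v ∈ p.support, v ∉ A) → ∃ v ∈ p.support, v ∉ sball G A s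

end GFF
namespace GFF
open Matrix

lemma deg_eq {V : Type} [Fintype V] {G : SimpleGraph V} {d : ℕ} (hreg : IsReg G d) (v : V) :
    G.degree v = d := by
  rw [← hreg v, Nat.card_eq_fintype_card, SimpleGraph.card_neighborSet_eq_degree]

/-- the averaging matrix -/
noncomputable def PiM (V : Type) [Fintype V] : Matrix V V ℝ :=
  Matrix.of fun _ _ => ((Fintype.card V : ℝ))⁻¹

lemma lap_eq {V : Type} [Fintype V] {G : SimpleGraph V} {d : ℕ} (hd : 3 ≤ d) (hreg : IsReg G d) :
    G.lapMatrix ℝ = (d : ℝ) • (1 - transP G d) := by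
  have hd0 : (d : ℝ) ≠ 0 := by positivity
  ext i j
  by_cases hij : i = j
  · subst hij
    simp [SimpleGraph.lapMatrix, SimpleGraph.degMatrix, transP, deg_eq hreg]
  · by_cases h : G.Adj i j <;>
    simp [SimpleGraph.lapMatrix, SimpleGraph.degMatrix, transP, hij, h, hd0]

lemma quad_nonneg {V : Type} [Fintype V] {G : SimpleGraph V} {d : ℕ} (hd : 3 ≤ d)
    (hreg : IsReg G d) (v : V → ℝ) : 0 ≤ v ⬝ᵥ ((1 - transP G d) *ᵥ v) := by
  have h := (SimpleGraph.posSemidef_lapMatrix ℝ G).dotProduct_mulVec_nonneg v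
  rw [lap_eq hd hreg, smul_mulVec, dotProduct_smul, star_trivial, smul_eq_mul] at h
  have hd0 : (0 : ℝ) < d := by positivity
  exact nonneg_of_mul_nonneg_right h hd0

lemma quad_zero {V : Type} [Fintype V] {G : SimpleGraph V} {d : ℕ} (hd : 3 ≤ d)
    (hreg : IsReg G d) (hconn : G.Connected) (v : V → ℝ) (h : v ⬝ᵥ ((1 - transP G d) *ᵥ v) = 0)
    (i j : V) : v i = v j := by
  have h2 : Matrix.toLinearMap₂' ℝ (G.lapMatrix ℝ) v v = 0 := by
    rw [toLinearMap₂'_apply', lap_eq hd hreg, smul_mulVec, dotProduct_smul, h, smul_zero]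
  exact (SimpleGraph.lapMatrix_toLinearMap₂'_apply'_eq_zero_iff_forall_reachable G v).1 h2 i j
    (hconn.preconnected i j)

lemma transP_symm {V : Type} [Fintype V] (G : SimpleGraph V) (d : ℕ) : (transP G d)ᵀ = transP G d := by
  ext i j
  simp [transP, G.adj_comm]

lemma transP_row {V : Type} [Fintype V] {G : SimpleGraph V} {d : ℕ} (hd : 3 ≤ d)
    (hreg : IsReg G d) (i : V) : ∑ j, transP G d i j = 1 := by
  have hd0 : (d : ℝ) ≠ 0 := by positivity
  have h := SimpleGraph.degree_eq_sum_if_adj (R := ℝ) (G := G) i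
  rw [deg_eq hreg] at h
  have : ∑ j, transP G d i j = (d : ℝ)⁻¹ * ∑ j : V, if G.Adj i j then 1 else 0 := by
    rw [Finset.mul_sum]
    refine Finset.sum_congr rfl fun j _ => ?_
    by_cases h : G.Adj i j <;> simp [transP, h]
  rw [this, ← h]
  field_simp

lemma P_Pi {V : Type} [Fintype V] {G : SimpleGraph V} {d : ℕ} (hd : 3 ≤ d)
    (hreg : IsReg G d) : transP G d * PiM V = PiM V := by
  ext i j
  simp only [mul_apply, PiM, of_apply, ← Finset.sum_mul, transP_row hd hreg, one_mul]

lemma Pi_P {V : Type} [Fintype V] {G : SimpleGraph V} {d : ℕ} (hd : 3 ≤ d)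
    (hreg : IsReg G d) : PiM V * transP G d = PiM V := by
  have h := congrArg Matrix.transpose (P_Pi hd hreg)
  have h2 : (PiM V)ᵀ = PiM V := rfl
  rwa [transpose_mul, transP_symm, h2] at h

lemma Pi_Pi {V : Type} [Fintype V] [Nonempty V] : PiM V * PiM V = PiM V := by
  have : (Fintype.card V : ℝ) ≠ 0 := by simp
  ext i j
  simp [mul_apply, PiM, this]

/-- centred transition matrix -/
noncomputable def cB {V : Type} [Fintype V] (G : SimpleGraph V) (d : ℕ) : Matrix V V ℝ :=
  transP G d - PiM V

lemma cB_herm {V : Type} [Fintype V] (G : SimpleGraph V) (d : ℕ) : (cB G d).IsHermitian := by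
  rw [IsHermitian, conjTranspose_eq_transpose_of_trivial, cB, transpose_sub, transP_symm]
  rfl

lemma cB_pow {V : Type} [Fintype V] [Nonempty V] {G : SimpleGraph V} {d : ℕ} (hd : 3 ≤ d)
    (hreg : IsReg G d) (k : ℕ) : (transP G d) ^ k = (cB G d) ^ k + PiM V - if k = 0 then PiM V else 0 := by
  have h0 : ∀ k : ℕ, (transP G d) ^ (k+1) = (cB G d) ^ (k+1) + PiM V := by
    intro k
    induction k with
    | zero => simp [cB]
    | succ k ih =>
      have e1 : PiM V * cB G d = 0 := by
        rw [cB, mul_sub, Pi_P hd hreg, Pi_Pi, sub_self]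
      have e2 : cB G d * PiM V = 0 := by
        rw [cB, sub_mul, P_Pi hd hreg, Pi_Pi, sub_self]
      have e3 : transP G d = cB G d + PiM V := by simp [cB]
      rw [pow_succ, ih]
      nth_rw 1 [e3]
      rw [add_mul, mul_add, mul_add, e1, Pi_Pi, pow_succ _ (k+1), pow_succ _ k, mul_assoc _ _ (PiM V), e2]
      simp
  cases k with
  | zero => simp
  | succ k => simp [h0 k]

lemma eig_lt {V : Type} [Fintype V] [Nonempty V] {G : SimpleGraph V} {d : ℕ} (hd : 3 ≤ d)
    (hreg : IsReg G d) (hconn : G.Connected) (i : V) : (cB_herm G d).eigenvalues i < 1 := by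
  set ν := (cB_herm G d).eigenvalues i
  set v : V → ℝ := ⇑((cB_herm G d).eigenvectorBasis i) with hv
  have hNpos : (0 : ℝ) < Fintype.card V := by
    have := Fintype.card_pos (α := V)
    exact_mod_cast this
  have hev : cB G d *ᵥ v = ν • v := (cB_herm G d).mulVec_eigenvectorBasis i
  have hv0 : v ≠ 0 := by
    intro h
    have h1 : (cB_herm G d).eigenvectorBasis i ≠ 0 :=
      (cB_herm G d).eigenvectorBasis.orthonormal.ne_zero i
    apply h1
    ext j
    exact congrFun h j
  have hpos : 0 < v ⬝ᵥ v := by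
    have := (dotProduct_star_self_pos_iff (v := v)).2 hv0
    simpa using this
  have hpi : v ⬝ᵥ (PiM V *ᵥ v) = (Fintype.card V : ℝ)⁻¹ * (∑ j, v j) ^ 2 := by
    simp only [dotProduct, mulVec, PiM, of_apply, ← Finset.mul_sum, ← Finset.sum_mul]
    ring
  have hkey : v ⬝ᵥ ((1 - transP G d) *ᵥ v) + v ⬝ᵥ (PiM V *ᵥ v) = (1 - ν) * (v ⬝ᵥ v) := by
    rw [← dotProduct_add, ← add_mulVec]
    have : 1 - transP G d + PiM V = 1 - cB G d := by simp [cB]; abel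
    rw [this, sub_mulVec, hev, one_mulVec, dotProduct_sub, dotProduct_smul, smul_eq_mul]
    ring
  have hq := quad_nonneg hd hreg v
  have hp : 0 ≤ v ⬝ᵥ (PiM V *ᵥ v) := by rw [hpi]; positivity
  by_contra hcon
  have hle : (1 - ν) * (v ⬝ᵥ v) ≤ 0 := by nlinarith
  have z1 : v ⬝ᵥ ((1 - transP G d) *ᵥ v) = 0 := by linarith
  have z2 : v ⬝ᵥ (PiM V *ᵥ v) = 0 := by linarith
  have hc := quad_zero hd hreg hconn v z1
  rw [hpi] at z2
  have z3 : ∑ j, v j = 0 := by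
    rcases mul_eq_zero.1 z2 with h | h
    · exact absurd h (by positivity)
    · exact pow_eq_zero_iff (two_ne_zero) |>.1 h
  apply hv0
  ext j
  have : ∑ k, v k = Fintype.card V * v j := by
    rw [Finset.sum_congr rfl (fun k _ => hc k j)]; simp
  rw [this] at z3
  rcases mul_eq_zero.1 z3 with h | h
  · exact absurd h hNpos.ne'
  · simpa using h

/-- spectral function calculus -/
noncomputable def spf {V : Type} [Fintype V] (G : SimpleGraph V) (d : ℕ) (g : ℝ → ℝ) : Matrix V V ℝ :=
  ((cB_herm G d).eigenvectorUnitary : Matrix V V ℝ) *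
    diagonal (fun i => g ((cB_herm G d).eigenvalues i)) *
    star ((cB_herm G d).eigenvectorUnitary : Matrix V V ℝ)

lemma spf_mul {V : Type} [Fintype V] (G : SimpleGraph V) (d : ℕ) (g h : ℝ → ℝ) :
    spf G d g * spf G d h = spf G d (fun s => g s * h s) := by
  have hU : star ((cB_herm G d).eigenvectorUnitary : Matrix V V ℝ) *
     ((cB_herm G d).eigenvectorUnitary : Matrix V V ℝ) = 1 := Unitary.coe_star_mul_self _
  unfold spf
  generalize ((cB_herm G d).eigenvectorUnitary : Matrix V V ℝ) = U at *
  rw [← diagonal_mul_diagonal]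
  simp only [mul_assoc]
  rw [← mul_assoc (star U) U, hU, one_mul]

lemma spf_one {V : Type} [Fintype V] (G : SimpleGraph V) (d : ℕ) :
    spf G d (fun _ => 1) = 1 := by
  have hU : ((cB_herm G d).eigenvectorUnitary : Matrix V V ℝ) *
     star ((cB_herm G d).eigenvectorUnitary : Matrix V V ℝ) = 1 := Unitary.coe_mul_star_self _
  unfold spf
  simp [hU]

lemma spf_id {V : Type} [Fintype V] (G : SimpleGraph V) (d : ℕ) :
    spf G d (fun s => s) = cB G d := by
  have := (cB_herm G d).spectral_theorem
  rw [Unitary.conjStarAlgAut_apply] at this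
  conv_rhs => rw [this]
  rfl

lemma spf_pow {V : Type} [Fintype V] (G : SimpleGraph V) (d : ℕ) (k : ℕ) :
    spf G d (fun s => s ^ k) = (cB G d) ^ k := by
  induction k with
  | zero => simp [spf_one]
  | succ k ih =>
    rw [pow_succ, ← ih]
    nth_rw 1 [← spf_id]
    rw [spf_mul]
    rfl

/-- spectral weights -/
noncomputable def spw {V : Type} [Fintype V] (G : SimpleGraph V) (d : ℕ) (x y i : V) : ℝ :=
  ((cB_herm G d).eigenvectorUnitary : Matrix V V ℝ) x i *
   ((cB_herm G d).eigenvectorUnitary : Matrix V V ℝ) y i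

lemma spf_apply {V : Type} [Fintype V] (G : SimpleGraph V) (d : ℕ) (g : ℝ → ℝ) (x y : V) :
    spf G d g x y = ∑ i, spw G d x y i * g ((cB_herm G d).eigenvalues i) := by
  unfold spf spw
  generalize ((cB_herm G d).eigenvectorUnitary : Matrix V V ℝ) = U
  rw [mul_apply]
  refine Finset.sum_congr rfl fun i _ => ?_
  rw [mul_diagonal, star_apply, star_trivial]
  ring

lemma heatK_eq {V : Type} [Fintype V] [Nonempty V] {G : SimpleGraph V} {d : ℕ} (hd : 3 ≤ d)
    (hreg : IsReg G d) (t : ℝ) (x y : V) :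
    heatK G d t x y = ∑ i, spw G d x y i * Real.exp (- (1 - (cB_herm G d).eigenvalues i) * t)
      + (Fintype.card V : ℝ)⁻¹ - Real.exp (-t) * (Fintype.card V : ℝ)⁻¹ := by
  have hexp : ∀ s : ℝ, HasSum (fun k : ℕ => s ^ k / (Nat.factorial k)) (Real.exp s) := by
    intro s
    rw [Real.exp_eq_exp_ℝ]
    exact NormedSpace.expSeries_div_hasSum_exp s
  unfold heatK
  apply HasSum.tsum_eq
  have h1 : HasSum (fun k : ℕ => ∑ i, spw G d x y i * (Real.exp (-t) * ((t * (cB_herm G d).eigenvalues i) ^ k / (Nat.factorial k))))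
     (∑ i, spw G d x y i * (Real.exp (-t) * Real.exp (t * (cB_herm G d).eigenvalues i))) := by
    apply hasSum_sum
    intro i _
    exact ((hexp _).mul_left _).mul_left _
  have h2 := ((hexp t).mul_left (Real.exp (-t))).mul_right ((Fintype.card V : ℝ)⁻¹)
  have h3 : HasSum (fun k : ℕ => if k = 0 then Real.exp (-t) * (Fintype.card V : ℝ)⁻¹ else 0)
    (Real.exp (-t) * (Fintype.card V : ℝ)⁻¹) := hasSum_ite_eq 0 _
  have h := (h1.add h2).sub h3
  have eS : (∑ i, spw G d x y i * Real.exp (- (1 - (cB_herm G d).eigenvalues i) * t)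
      + (Fintype.card V : ℝ)⁻¹ - Real.exp (-t) * (Fintype.card V : ℝ)⁻¹) =
      ∑ i, spw G d x y i * (Real.exp (-t) * Real.exp (t * (cB_herm G d).eigenvalues i)) +
        Real.exp (-t) * Real.exp t * (Fintype.card V : ℝ)⁻¹ -
      Real.exp (-t) * (Fintype.card V : ℝ)⁻¹ := by
    rw [← Real.exp_add, neg_add_cancel, Real.exp_zero, one_mul]
    congr 2
    refine Finset.sum_congr rfl fun i _ => ?_
    rw [← Real.exp_add]
    congr 2
    ring
  rw [eS]
  refine (congrArg (fun f : ℕ → ℝ => HasSum f _) (funext fun k => ?_)).mpr h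
  · rw [cB_pow hd hreg, Matrix.sub_apply, Matrix.add_apply, ← spf_pow, spf_apply]
    by_cases hk : k = 0
    · subst hk
      simp [PiM, mul_comm, Finset.mul_sum, Finset.sum_mul]
    · simp only [hk, if_false, PiM, of_apply, Matrix.zero_apply, sub_zero, mul_add, Finset.mul_sum]
      congr 1
      · refine Finset.sum_congr rfl fun i _ => ?_
        rw [mul_pow]; ring
      · ring

lemma zGreen_eq {V : Type} [Fintype V] [Nonempty V] {G : SimpleGraph V} {d : ℕ} (hd : 3 ≤ d)
    (hreg : IsReg G d) (hconn : G.Connected) (x y : V) :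
    zGreen G d (Fintype.card V) x y = (spf G d (fun s => (1 - s)⁻¹) - PiM V) x y := by
  have hint : ∀ a : ℝ, 0 < a → ∫ t in Set.Ioi (0 : ℝ), Real.exp (- a * t) = a⁻¹ := by
    intro a ha
    rw [integral_exp_mul_Ioi (by linarith) 0]
    simp
  have hi : ∀ a : ℝ, 0 < a → IntegrableOn (fun t => Real.exp (- a * t)) (Set.Ioi (0 : ℝ)) :=
    fun a ha => integrableOn_exp_mul_Ioi (by linarith) 0
  have hpos : ∀ i, 0 < 1 - (cB_herm G d).eigenvalues i := fun i => by
    linarith [eig_lt hd hreg hconn i]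
  unfold zGreen
  have he : ∀ t : ℝ, heatK G d t x y - 1 / (Fintype.card V : ℝ) =
     ∑ i, spw G d x y i * Real.exp (- (1 - (cB_herm G d).eigenvalues i) * t)
       - Real.exp (-1 * t) * (Fintype.card V : ℝ)⁻¹ := by
    intro t
    rw [heatK_eq hd hreg, one_div, neg_one_mul]
    ring
  simp_rw [he]
  rw [integral_sub, integral_finsetSum, integral_mul_const, hint 1 one_pos, Matrix.sub_apply, spf_apply]
  · simp only [integral_const_mul]
    congr 1
    · refine Finset.sum_congr rfl fun i _ => ?_
      rw [hint _ (hpos i)]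
    · simp [PiM]
  · intro i _
    exact (hi _ (hpos i)).const_mul _
  · exact integrable_finsetSum _ fun i _ => (hi _ (hpos i)).const_mul _
  · exact (hi 1 one_pos).mul_const _

lemma green_facts {V : Type} [Fintype V] [Nonempty V] {G : SimpleGraph V} {d : ℕ} (hd : 3 ≤ d)
    (hreg : IsReg G d) (hconn : G.Connected) :
    (∀ x y, zGreen G d (Fintype.card V) x y = zGreen G d (Fintype.card V) y x) ∧
    (∀ y, ∑ x, zGreen G d (Fintype.card V) x y = 0) ∧
    (∀ x y, zGreen G d (Fintype.card V) x y -
      ∑ z, transP G d x z * zGreen G d (Fintype.card V) z y =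
        (if x = y then 1 else 0) - (Fintype.card V : ℝ)⁻¹) ∧
    (∀ c : V → ℝ, 0 ≤ ∑ i, ∑ j, c i * c j * zGreen G d (Fintype.card V) i j) := by
  have hpos : ∀ i, 0 < 1 - (cB_herm G d).eigenvalues i := fun i => by
    linarith [eig_lt hd hreg hconn i]
  set S := spf G d (fun s => (1 - s)⁻¹) with hS
  set K : Matrix V V ℝ := S - PiM V with hK
  have hz : ∀ x y, zGreen G d (Fintype.card V) x y = K x y := zGreen_eq hd hreg hconn
  have hSB : S * (1 - cB G d) = 1 := by
    rw [mul_sub, mul_one]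
    nth_rw 1 [← spf_id]
    rw [spf_mul, ← spf_one G d]
    ext x y
    simp only [Matrix.sub_apply, hS, spf_apply]
    rw [← Finset.sum_sub_distrib]
    refine Finset.sum_congr rfl fun i _ => ?_
    have := (hpos i).ne'
    field_simp
  have hBS : (1 - cB G d) * S = 1 := mul_eq_one_comm.1 hSB
  have hBPi : (1 - cB G d) * PiM V = PiM V := by
    rw [sub_mul, one_mul, cB, sub_mul, P_Pi hd hreg, Pi_Pi, sub_self, sub_zero]
  have hSPi : S * PiM V = PiM V := by
    rw [← hBPi, ← mul_assoc, hSB, one_mul, hBPi]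
  have hsymm : Kᵀ = K := by
    have : Sᵀ = S := by
      ext x y
      rw [transpose_apply, hS, spf_apply, spf_apply]
      simp only [spw, mul_comm]
    rw [hK, transpose_sub, this]; rfl
  have hKPi : K * PiM V = 0 := by rw [hK, sub_mul, hSPi, Pi_Pi, sub_self]
  have hPiK : PiM V * K = 0 := by
    have h := congrArg Matrix.transpose hKPi
    have h2 : (PiM V)ᵀ = PiM V := rfl
    rwa [transpose_mul, hsymm, h2, transpose_zero] at h
  have hLK : (1 - transP G d) * K = 1 - PiM V := by
    have e : 1 - transP G d = (1 - cB G d) - PiM V := by rw [cB]; abel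
    rw [e, sub_mul, hPiK, hK, mul_sub, hBS, hBPi, sub_zero]
  have hN : (Fintype.card V : ℝ) ≠ 0 := by simp
  simp only [hz]
  refine ⟨fun x y => ?_, fun y => ?_, fun x y => ?_, fun c => ?_⟩
  · conv_lhs => rw [← hsymm]
    rfl
  · have := congrFun (congrFun hPiK y) y
    simp only [mul_apply, PiM, of_apply, ← Finset.mul_sum, Matrix.zero_apply] at this
    rcases mul_eq_zero.1 this with h | h
    · exact absurd h (inv_ne_zero hN)
    · exact h
  · have := congrFun (congrFun hLK x) y
    rw [sub_mul, one_mul, Matrix.sub_apply, Matrix.sub_apply, mul_apply, one_apply] at this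
    exact this
  · have h := quad_nonneg hd hreg (K *ᵥ c)
    rw [mulVec_mulVec, hLK, sub_mulVec 1 (PiM V), one_mulVec, dotProduct_sub, ← vecMul_transpose K, hsymm] at h
    have h3 : (c ᵥ* K) ⬝ᵥ (PiM V *ᵥ c) = 0 := by
      rw [dotProduct_mulVec, vecMul_vecMul, hKPi]; simp
    rw [h3, sub_zero] at h
    convert h using 1
    simp only [dotProduct, vecMul, Finset.sum_mul]
    rw [Finset.sum_comm]
    refine Finset.sum_congr rfl fun i _ => Finset.sum_congr rfl fun j _ => ?_
    ring

end GFF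
namespace GFF

lemma srw_discrete {V : Type} [Fintype V] [m : MeasurableSpace V] {G : SimpleGraph V} {d : ℕ}
    {W : V → Measure (ℕ → V)} (hW : IsSRW G d W) : DiscreteMeasurableSpace V := by
  have hsep : ∀ u v : V, u ≠ v → ∃ s : Set V, MeasurableSet s ∧ u ∈ s ∧ v ∉ s := by
    intro u v huv
    by_contra hcon
    push Not at hcon
    have hiff : ∀ s : Set V, MeasurableSet s → (u ∈ s ↔ v ∈ s) := by
      intro s hs
      refine ⟨hcon s hs, fun hv => ?_⟩
      by_contra hu
      exact hcon sᶜ hs.compl hu hv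
    have hsw : ∀ s : Set V, MeasurableSet s → (Equiv.swap u v) ⁻¹' s = s := by
      intro s hs
      ext w
      simp only [Set.mem_preimage]
      by_cases h1 : w = u
      · subst h1; simp [hiff s hs]
      · by_cases h2 : w = v
        · subst h2; simp [hiff s hs]
        · rw [Equiv.swap_apply_of_ne_of_ne h1 h2]
    let T : (ℕ → V) → (ℕ → V) := fun ω n => Equiv.swap u v (ω n)
    have hinv : ∀ E : Set (ℕ → V), MeasurableSet E → T ⁻¹' E = E := by
      intro E0 hE0
      let m' : MeasurableSpace (ℕ → V) :=
        { MeasurableSet' := fun E => T ⁻¹' E = E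
          measurableSet_empty := rfl
          measurableSet_compl := fun s hs => by
            rw [Set.preimage_compl, hs]
          measurableSet_iUnion := fun f hf => by
            rw [Set.preimage_iUnion]
            exact Set.iUnion_congr hf }
      have hle : (MeasurableSpace.pi : MeasurableSpace (ℕ → V)) ≤ m' := by
        refine iSup_le fun i => ?_
        rintro E ⟨s, hs, rfl⟩
        change T ⁻¹' _ = _
        change (fun ω : ℕ → V => ω i) ⁻¹' ((Equiv.swap u v) ⁻¹' s) = _
        rw [hsw s hs]
      exact hle _ hE0
    have h1 : W u {ω | ω 0 = u} = 1 := by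
      have := hW.2 u 0 (fun _ => u)
      simpa using this
    have h0 : W u {ω | ω 0 = v} = 0 := by
      have := hW.2 u 0 (fun _ => v)
      simpa [huv.symm] using this
    have hE := hinv _ (measurableSet_toMeasurable (W u) {ω | ω 0 = v})
    have hsub : {ω : ℕ → V | ω 0 = u} ⊆ toMeasurable (W u) {ω | ω 0 = v} := by
      intro ω hω
      rw [← hE]
      apply subset_toMeasurable
      change Equiv.swap u v (ω 0) = v
      rw [hω, Equiv.swap_apply_left]
    have := measure_mono (μ := W u) hsub
    rw [measure_toMeasurable, h1, h0] at this
    simp at this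
  have hsing : MeasurableSingletonClass V := by
    constructor
    intro u
    choose! s hs using hsep u
    have : ({u} : Set V) = ⋂ v ∈ ({u}ᶜ : Set V), s v := by
      ext w
      simp only [Set.mem_singleton_iff, Set.mem_iInter, Set.mem_compl_iff]
      constructor
      · rintro rfl v hv
        exact (hs v (Ne.symm hv)).2.1
      · intro h
        by_contra hw
        exact (hs w (Ne.symm hw)).2.2 (h w hw)
    rw [this]
    exact MeasurableSet.biInter (Set.to_countable _) fun v hv => (hs v (Ne.symm hv)).1
  infer_instance

lemma integral_comp_finite {V Ω : Type} [Fintype V] [MeasurableSpace V] [DiscreteMeasurableSpace V]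
    [MeasurableSpace Ω] (ν : Measure Ω) [IsFiniteMeasure ν] (X : Ω → V) (hX : Measurable X)
    (h : V → ℝ) : ∫ ω, h (X ω) ∂ν = ∑ v, ν.real {ω | X ω = v} * h v := by
  rw [← integral_map (f := h) hX.aemeasurable (measurable_of_countable h).aestronglyMeasurable]
  have : IsFiniteMeasure (ν.map X) := inferInstance
  rw [integral_fintype .of_finite]
  refine Finset.sum_congr rfl fun v _ => ?_
  rw [smul_eq_mul, measureReal_def, Measure.map_apply hX (measurableSet_singleton v)]
  rfl

/-- cylinder -/
def cyl {V : Type} (n : ℕ) (p : ℕ → V) : Set (ℕ → V) := {ω | ∀ i ≤ n, ω i = p i}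

/-- not yet in `A` up to time `n` -/
def Dn {V : Type} (A : Set V) (n : ℕ) : Set (ℕ → V) := {ω | ∀ i ≤ n, ω i ∉ A}

set_option linter.unusedSectionVars false

section
variable {V : Type} [Fintype V] [MeasurableSpace V] [DiscreteMeasurableSpace V]
  {G : SimpleGraph V} {d : ℕ} {W : V → Measure (ℕ → V)}

lemma meas_cyl (n : ℕ) (p : ℕ → V) : MeasurableSet (cyl n p) := by
  have : cyl n p = ⋂ i ∈ Set.Iic n, (fun ω : ℕ → V => ω i) ⁻¹' {p i} := by
    ext ω; simp [cyl]
  rw [this]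
  exact MeasurableSet.biInter (Set.to_countable _) fun i _ =>
    measurable_pi_apply i (measurableSet_singleton _)

lemma meas_Dn (A : Set V) (n : ℕ) : MeasurableSet (Dn A n) := by
  have : Dn A n = ⋂ i ∈ Set.Iic n, (fun ω : ℕ → V => ω i) ⁻¹' Aᶜ := by
    ext ω; simp [Dn]
  rw [this]
  exact MeasurableSet.biInter (Set.to_countable _) fun i _ =>
    measurable_pi_apply i (MeasurableSet.of_discrete)

lemma cyl_succ (hW : IsSRW G d W) (x : V) (n : ℕ) (q : ℕ → V) :
    (W x).real (cyl (n + 1) q) = (W x).real (cyl n q) * transP G d (q n) (q (n + 1)) := by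
  have h1 := hW.2 x (n + 1) q
  rw [Finset.prod_range_succ, ← mul_assoc, ← hW.2 x n q] at h1
  rw [measureReal_def, cyl, h1, ENNReal.toReal_mul]
  congr 1
  simp only [srwStep, transP, Matrix.of_apply]
  split_ifs <;> simp

lemma markov_cyl (hW : IsSRW G d W) (x : V) (n : ℕ) (p : ℕ → V) (h : V → ℝ) :
    ∫ ω in cyl n p, h (ω (n + 1)) ∂(W x) =
      ∫ ω in cyl n p, (∑ v, transP G d (ω n) v * h v) ∂(W x) := by
  have := hW.1 x
  have e : ∫ ω in cyl n p, (∑ v, transP G d (ω n) v * h v) ∂(W x) =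
      ∫ ω in cyl n p, (∑ v, transP G d (p n) v * h v) ∂(W x) := by
    refine setIntegral_congr_fun (meas_cyl n p) fun ω hω => ?_
    rw [hω n le_rfl]
  rw [e, integral_comp_finite _ (fun ω : ℕ → V => ω (n + 1)) (measurable_pi_apply _),
    setIntegral_const, smul_eq_mul, Finset.mul_sum]
  refine Finset.sum_congr rfl fun v _ => ?_
  have h2 := cyl_succ hW x n (Function.update p (n + 1) v)
  have h3 : cyl n (Function.update p (n + 1) v) = cyl n p := by
    ext ω
    refine forall₂_congr fun i hi => ?_
    rw [Function.update_of_ne (by omega)]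
  have h4 : cyl (n + 1) (Function.update p (n + 1) v) = {ω | ω (n + 1) = v} ∩ cyl n p := by
    ext ω
    constructor
    · intro hω
      refine ⟨by simpa using hω (n + 1) le_rfl, fun i hi => ?_⟩
      rw [hω i (by omega), Function.update_of_ne (by omega)]
    · rintro ⟨h5, h6⟩ i hi
      rcases Nat.lt_or_ge n i with hlt | hge
      · obtain rfl : i = n + 1 := by omega
        simpa using h5
      · rw [h6 i hge, Function.update_of_ne (by omega)]
  rw [h3, h4, Function.update_self, Function.update_of_ne (by omega)] at h2
  have h5 : MeasurableSet {ω : ℕ → V | ω (n + 1) = v} :=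
    (measurable_pi_apply (X := fun _ : ℕ => V) (n + 1)) (measurableSet_singleton v)
  rw [← mul_assoc, ← h2, measureReal_restrict_apply h5]

lemma int_of_bdd (x : V) (hW : IsSRW G d W) {f : (ℕ → V) → ℝ} (hf : Measurable f) (C : ℝ)
    (hC : ∀ ω, |f ω| ≤ C) : Integrable f (W x) := by
  have := hW.1 x
  exact Integrable.of_bound hf.aestronglyMeasurable C (Eventually.of_forall hC)

lemma bdd_fun (h : V → ℝ) : ∃ C, 0 ≤ C ∧ ∀ v, |h v| ≤ C :=
  ⟨∑ v, |h v|, Finset.sum_nonneg fun _ _ => abs_nonneg _, fun v =>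
    Finset.single_le_sum (f := fun v => |h v|) (fun _ _ => abs_nonneg _) (Finset.mem_univ v)⟩

lemma int_eval (x : V) (hW : IsSRW G d W) (h : V → ℝ) (n : ℕ) :
    Integrable (fun ω => h (ω n)) (W x) := by
  obtain ⟨C, -, hC⟩ := bdd_fun h
  exact int_of_bdd x hW ((measurable_of_countable h).comp (measurable_pi_apply n)) C
    fun ω => hC _

lemma markov_D (hW : IsSRW G d W) (A : Set V) (x : V) (n : ℕ) (h : V → ℝ) :
    ∫ ω in Dn A n, h (ω (n + 1)) ∂(W x) =
      ∫ ω in Dn A n, (∑ v, transP G d (ω n) v * h v) ∂(W x) := by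
  let ext : (Fin (n + 1) → V) → (ℕ → V) := fun p i => p ⟨min i n, by omega⟩
  let E : (Fin (n + 1) → V) → Set (ℕ → V) := fun p => Dn A n ∩ cyl n (ext p)
  have hEm : ∀ p, MeasurableSet (E p) := fun p => (meas_Dn A n).inter (meas_cyl _ _)
  have hU : Dn A n = ⋃ p, E p := by
    ext ω
    simp only [E, Set.mem_iUnion, Set.mem_inter_iff]
    refine ⟨fun hω => ⟨fun i => ω i, hω, fun i hi => ?_⟩, fun ⟨p, hp⟩ => hp.1⟩
    simp [ext, hi]
  have hdisj : Pairwise (Function.onFun Disjoint E) := by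
    intro p q hpq
    refine Set.disjoint_left.2 fun ω hp hq => hpq ?_
    funext i
    have h1 := hp.2 i (by omega)
    have h2 := hq.2 i (by omega)
    have h3 : (⟨min (i : ℕ) n, by omega⟩ : Fin (n + 1)) = i := by
      ext; simp; omega
    simp only [ext, h3] at h1 h2
    rw [← h1, ← h2]
  rw [hU, integral_iUnion_fintype hEm hdisj fun p => (int_eval x hW h (n + 1)).integrableOn,
    integral_iUnion_fintype hEm hdisj fun p =>
      (int_eval x hW (fun u => ∑ v, transP G d u v * h v) n).integrableOn]
  refine Finset.sum_congr rfl fun p _ => ?_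
  by_cases hp : ∀ i ≤ n, ext p i ∉ A
  · have : E p = cyl n (ext p) := by
      refine Set.inter_eq_right.2 fun ω hω i hi => ?_
      rw [hω i hi]; exact hp i hi
    rw [this]
    exact markov_cyl hW x n _ h
  · have : E p = ∅ := by
      refine Set.eq_empty_of_forall_notMem fun ω hω => hp fun i hi => ?_
      rw [← hω.2 i hi]; exact hω.1 i hi
    rw [this]; simp

end

end GFF
namespace GFF

lemma lt_hit_iff {V : Type} (A : Set V) (ω : ℕ → V) (n : ℕ) :
    (n : ℕ∞) < hitTime A ω ↔ ω ∈ Dn A n := by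
  constructor
  · intro h i hi hA
    have h1 : hitTime A ω ≤ (i : ℕ∞) := sInf_le ⟨i, hA, rfl⟩
    have h2 : (i : ℕ∞) ≤ n := by exact_mod_cast hi
    exact absurd (h.trans_le (h1.trans h2)) (lt_irrefl _)
  · intro h
    have : ((n + 1 : ℕ) : ℕ∞) ≤ hitTime A ω := by
      refine le_sInf ?_
      rintro _ ⟨k, hk, rfl⟩
      have : ¬ k ≤ n := fun hkn => h k hkn hk
      exact_mod_cast (by omega : n + 1 ≤ k)
    refine lt_of_lt_of_le ?_ this
    exact_mod_cast Nat.lt_succ_self n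

lemma hit_mem {V : Type} (A : Set V) (ω : ℕ → V) (h : hitTime A ω ≠ ⊤) : stopAt A ω ∈ A := by
  obtain ⟨n, hn⟩ := ENat.ne_top_iff_exists.1 h
  have h1 : ω ∉ Dn A n := by
    rw [← lt_hit_iff, ← hn]; exact lt_irrefl _
  simp only [Dn, Set.mem_setOf_eq, not_forall, not_not] at h1
  obtain ⟨i, hi, hA⟩ := h1
  have h2 : hitTime A ω ≤ (i : ℕ∞) := sInf_le ⟨i, hA, rfl⟩
  rw [← hn] at h2
  have h3 : n ≤ i := by exact_mod_cast h2
  obtain rfl : i = n := le_antisymm hi h3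
  rw [stopAt, ← hn, ENat.toNat_coe]
  exact hA

lemma top_iff {V : Type} (A : Set V) (ω : ℕ → V) : hitTime A ω = ⊤ ↔ ∀ n, ω ∈ Dn A n := by
  constructor
  · intro h n
    rw [← lt_hit_iff, h]; exact ENat.coe_lt_top n
  · intro h
    by_contra hne
    obtain ⟨n, hn⟩ := ENat.ne_top_iff_exists.1 hne
    have := (lt_hit_iff A ω n).2 (h n)
    rw [← hn] at this
    exact lt_irrefl _ this

/-- truncated hitting time -/
noncomputable def tau {V : Type} (A : Set V) (n : ℕ) (ω : ℕ → V) : ℕ :=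
  (min (n : ℕ∞) (hitTime A ω)).toNat

lemma tau_of_D {V : Type} (A : Set V) (n : ℕ) (ω : ℕ → V) (h : ω ∈ Dn A n) :
    tau A n ω = n ∧ tau A (n + 1) ω = n + 1 := by
  have h1 := (lt_hit_iff A ω n).2 h
  have h2 : ((n + 1 : ℕ) : ℕ∞) ≤ hitTime A ω := by
    push_cast
    exact Order.add_one_le_of_lt h1
  constructor
  · rw [tau, min_eq_left h1.le, ENat.toNat_coe]
  · rw [tau, min_eq_left h2, ENat.toNat_coe]

lemma tau_of_not_D {V : Type} (A : Set V) (n m : ℕ) (hnm : n ≤ m) (ω : ℕ → V) (h : ω ∉ Dn A n) :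
    tau A m ω = (hitTime A ω).toNat := by
  rw [← lt_hit_iff, not_lt] at h
  have : (n : ℕ∞) ≤ m := by exact_mod_cast hnm
  rw [tau, min_eq_right (h.trans this)]

lemma tau_zero {V : Type} (A : Set V) (ω : ℕ → V) : tau A 0 ω = 0 := by
  simp [tau]

lemma stopped_eq {V : Type} (A : Set V) (h : V → ℝ) (n : ℕ) (ω : ℕ → V) :
    h (ω (tau A (n + 1) ω)) = h (ω (tau A n ω)) +
      (Dn A n).indicator (fun ω => h (ω (n + 1)) - h (ω n)) ω := by
  by_cases hD : ω ∈ Dn A n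
  · obtain ⟨h1, h2⟩ := tau_of_D A n ω hD
    rw [h1, h2, Set.indicator_of_mem hD]; ring
  · rw [tau_of_not_D A n n le_rfl ω hD, tau_of_not_D A n (n + 1) (by omega) ω hD,
      Set.indicator_of_notMem hD, add_zero]

section
variable {V : Type} [Fintype V] [MeasurableSpace V] [DiscreteMeasurableSpace V]
  {G : SimpleGraph V} {d : ℕ} {W : V → Measure (ℕ → V)}

lemma meas_hit (A : Set V) : Measurable fun ω : ℕ → V => (hitTime A ω).toNat := by
  refine measurable_of_Ioi fun n => ?_
  have : (fun ω : ℕ → V => (hitTime A ω).toNat) ⁻¹' Set.Ioi n = Dn A n \ ⋂ k, Dn A k := by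
    ext ω
    simp only [Set.mem_preimage, Set.mem_Ioi, Set.mem_diff, Set.mem_iInter]
    rw [← top_iff, ← lt_hit_iff]
    by_cases h : hitTime A ω = ⊤
    · simp [h]
    · obtain ⟨m, hm⟩ := ENat.ne_top_iff_exists.1 h
      rw [← hm]
      simp
  rw [this]
  exact (meas_Dn A n).diff (MeasurableSet.iInter fun k => meas_Dn A k)

lemma meas_stopAt (A : Set V) : Measurable fun ω : ℕ → V => stopAt A ω := by
  have h1 : Measurable fun q : ℕ × (ℕ → V) => q.2 q.1 :=
    measurable_from_prod_countable_right fun n => measurable_pi_apply n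
  exact h1.comp ((meas_hit A).prodMk measurable_id)

lemma meas_stopped (A : Set V) (h : V → ℝ) (n : ℕ) :
    Measurable fun ω : ℕ → V => h (ω (tau A n ω)) := by
  induction n with
  | zero =>
    simp only [tau_zero]
    exact (measurable_of_countable h).comp (measurable_pi_apply 0)
  | succ n ih =>
    simp only [stopped_eq]
    refine ih.add (Measurable.indicator ?_ (meas_Dn A n))
    exact ((measurable_of_countable h).comp (measurable_pi_apply _)).sub
      ((measurable_of_countable h).comp (measurable_pi_apply _))

lemma start (hW : IsSRW G d W) (x : V) : ∀ᵐ ω ∂(W x), ω 0 = x := by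
  have := hW.1 x
  have h1 : W x {ω | ω 0 = x} = 1 := by
    have := hW.2 x 0 (fun _ => x)
    simpa using this
  have hm : MeasurableSet {ω : ℕ → V | ω 0 = x} :=
    (measurable_pi_apply (X := fun _ : ℕ => V) 0) (measurableSet_singleton x)
  exact (prob_compl_eq_zero_iff hm).2 h1

lemma stopped_mean (hW : IsSRW G d W) (A : Set V) (x : V) (h : V → ℝ) (c : ℝ)
    (hh : ∀ z, z ∉ A → ∑ v, transP G d z v * h v = h z + c) (n : ℕ) :
    ∫ ω, h (ω (tau A n ω)) ∂(W x) = h x + c * ∑ k ∈ Finset.range n, (W x).real (Dn A k) := by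
  have := hW.1 x
  obtain ⟨C, -, hC⟩ := bdd_fun h
  induction n with
  | zero =>
    simp only [tau_zero, Finset.range_zero, Finset.sum_empty, mul_zero, add_zero]
    rw [integral_congr_ae (g := fun _ => h x) ((start hW x).mono fun ω hω => by simp [hω])]
    simp
  | succ n ih =>
    simp only [stopped_eq]
    have i1 : Integrable (fun ω : ℕ → V => h (ω (n + 1))) (W x) := int_eval x hW h (n + 1)
    have i2 : Integrable (fun ω : ℕ → V => h (ω n)) (W x) := int_eval x hW h n
    have i3 : Integrable (fun ω : ℕ → V => h (ω (n + 1)) - h (ω n)) (W x) := i1.sub i2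
    rw [integral_add (int_of_bdd x hW (meas_stopped A h n) C fun ω => hC _)
      (i3.indicator (meas_Dn A n)), ih, integral_indicator (meas_Dn A n),
      integral_sub i1.integrableOn i2.integrableOn, markov_D hW A x n h]
    have e : ∫ ω in Dn A n, (∑ v, transP G d (ω n) v * h v) ∂(W x) =
        ∫ ω in Dn A n, (h (ω n) + c) ∂(W x) :=
      setIntegral_congr_fun (meas_Dn A n) fun ω hω => hh _ (hω n le_rfl)
    rw [e, integral_add i2.integrableOn (integrable_const c), setIntegral_const, smul_eq_mul,
      Finset.sum_range_succ]
    ring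

lemma summable_D (hW : IsSRW G d W) (A : Set V) (x : V) (h : V → ℝ) (c : ℝ) (hc : 0 < c)
    (hh : ∀ z, z ∉ A → ∑ v, transP G d z v * h v = h z + c) :
    Summable fun k => (W x).real (Dn A k) := by
  have := hW.1 x
  obtain ⟨C, -, hC⟩ := bdd_fun h
  refine summable_of_sum_range_le (c := (2 * C) / c) (fun _ => measureReal_nonneg) fun n => ?_
  rw [le_div_iff₀ hc]
  have h1 := stopped_mean hW A x h c hh n
  have h2 : ∫ ω, h (ω (tau A n ω)) ∂(W x) ≤ C := by
    have := integral_mono (μ := W x) (int_of_bdd x hW (meas_stopped A h n) C fun ω => hC _)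
      (integrable_const C) fun ω => (abs_le.1 (hC _)).2
    simpa using this
  have h3 := (abs_le.1 (hC x)).1
  nlinarith

lemma hit_ae (hW : IsSRW G d W) (A : Set V) (x : V)
    (hs : Summable fun k => (W x).real (Dn A k)) : ∀ᵐ ω ∂(W x), hitTime A ω ≠ ⊤ := by
  have := hW.1 x
  have h0 : (W x).real {ω | hitTime A ω = ⊤} = 0 := by
    refine le_antisymm ?_ measureReal_nonneg
    refine ge_of_tendsto' hs.tendsto_atTop_zero fun k => measureReal_mono ?_
    intro ω hω
    exact (top_iff A ω).1 hω k
  rw [measureReal_eq_zero_iff] at h0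
  rw [ae_iff]
  simpa using h0

lemma hit_mean (hW : IsSRW G d W) (A : Set V) (x : V)
    (hs : Summable fun k => (W x).real (Dn A k)) :
    HasSum (fun k => (W x).real (Dn A k)) (∫ ω, ((hitTime A ω).toNat : ℝ) ∂(W x)) := by
  have := hW.1 x
  have e : ∀ k, ∫ ω, (Dn A k).indicator (fun _ => (1 : ℝ)) ω ∂(W x) = (W x).real (Dn A k) := by
    intro k
    rw [integral_indicator (meas_Dn A k)]; simp
  have h1 := hasSum_integral_of_summable_integral_norm (μ := W x)
    (F := fun k (ω : ℕ → V) => (Dn A k).indicator (fun _ => (1 : ℝ)) ω)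
    (fun k => (integrable_const (1 : ℝ)).indicator (meas_Dn A k)) (by
      refine hs.congr fun k => ?_
      rw [← e k]
      refine integral_congr_ae (Eventually.of_forall fun ω => ?_)
      simp only [Set.indicator]
      split_ifs <;> simp)
  simp only [e] at h1
  have e2 : ∫ ω, ((hitTime A ω).toNat : ℝ) ∂(W x) =
      ∫ ω, (∑' k, (Dn A k).indicator (fun _ => (1 : ℝ)) ω) ∂(W x) := ?_
  · rw [e2]; exact h1
  refine integral_congr_ae ((hit_ae hW A x hs).mono fun ω hω => ?_)
  obtain ⟨n, hn⟩ := ENat.ne_top_iff_exists.1 hω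
  simp only
  rw [tsum_eq_sum (s := Finset.range n), ← hn, ENat.toNat_coe]
  · rw [Finset.sum_congr rfl (g := fun _ => (1 : ℝ))]
    · simp
    · intro k hk
      rw [Set.indicator_of_mem]
      rw [← lt_hit_iff, ← hn]
      exact_mod_cast Finset.mem_range.1 hk
  · intro k hk
    rw [Set.indicator_of_notMem]
    rw [← lt_hit_iff, ← hn]
    rw [Finset.mem_range] at hk
    exact_mod_cast hk

lemma stop_mean (hW : IsSRW G d W) (A : Set V) (x : V) (h : V → ℝ) (c : ℝ) (hc : 0 < c)
    (hh : ∀ z, z ∉ A → ∑ v, transP G d z v * h v = h z + c) :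
    ∫ ω, h (stopAt A ω) ∂(W x) = h x + c * ∫ ω, ((hitTime A ω).toNat : ℝ) ∂(W x) := by
  have := hW.1 x
  have hs := summable_D hW A x h c hc hh
  obtain ⟨C, -, hC⟩ := bdd_fun h
  have t1 : Tendsto (fun n => ∫ ω, h (ω (tau A n ω)) ∂(W x)) atTop
      (nhds (∫ ω, h (stopAt A ω) ∂(W x))) := by
    refine tendsto_integral_of_dominated_convergence (fun _ => C)
      (fun n => (meas_stopped A h n).aestronglyMeasurable) (integrable_const C)
      (fun n => Eventually.of_forall fun ω => hC _) ((hit_ae hW A x hs).mono fun ω hω => ?_)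
    rw [Ne, top_iff, not_forall] at hω
    obtain ⟨n, hn⟩ := hω
    refine tendsto_const_nhds.congr' ?_
    filter_upwards [eventually_ge_atTop n] with m hm
    rw [tau_of_not_D A n m hm ω hn, stopAt]
  have t2 : Tendsto (fun n => ∫ ω, h (ω (tau A n ω)) ∂(W x)) atTop
      (nhds (h x + c * ∫ ω, ((hitTime A ω).toNat : ℝ) ∂(W x))) := by
    simp only [stopped_mean hW A x h c hh]
    exact ((hit_mean hW A x hs).tendsto_sum_nat.const_mul c).const_add (h x)
  exact tendsto_nhds_unique t1 t2

end

end GFF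
namespace GFF

lemma gauss_map {V : Type} [Fintype V] {K : V → V → ℝ} {μ : Measure (V → ℝ)}
    (hμ : IsGaussianField μ K) (c : V → ℝ) :
    μ.map (fun ω => ∑ i, c i * ω i) =
      gaussianReal 0 (Real.toNNReal (∑ i, ∑ j, c i * c j * K i j)) := by
  have h := hμ.2 (Finsupp.equivFunOnFinite.symm c)
  have hz : ∀ i, i ∉ (Finsupp.equivFunOnFinite.symm c).support → c i = 0 := by
    intro i hi
    simpa using hi
  have e1 : ∀ ω : V → ℝ, ∑ i ∈ (Finsupp.equivFunOnFinite.symm c).support,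
      (Finsupp.equivFunOnFinite.symm c) i * ω i = ∑ i, c i * ω i := by
    intro ω
    apply Finset.sum_subset (Finset.subset_univ _)
    intro i _ hi
    simp [hz i hi]
  have e2 : ∑ i ∈ (Finsupp.equivFunOnFinite.symm c).support,
      ∑ j ∈ (Finsupp.equivFunOnFinite.symm c).support, (Finsupp.equivFunOnFinite.symm c) i *
        (Finsupp.equivFunOnFinite.symm c) j * K i j = ∑ i, ∑ j, c i * c j * K i j := by
    rw [← Finset.sum_subset (Finset.subset_univ (Finsupp.equivFunOnFinite.symm c).support)]
    · apply Finset.sum_congr rfl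
      intro i _
      apply Finset.sum_subset (Finset.subset_univ _)
      intro j _ hj
      simp [hz j hj]
    · intro i _ hi
      simp [hz i hi]
  simp_rw [e1, e2] at h
  exact h

lemma gauss_isGaussian {V : Type} [Fintype V] {K : V → V → ℝ} {μ : Measure (V → ℝ)}
    (hμ : IsGaussianField μ K) : IsGaussian μ := by
  constructor
  intro L
  have hL : (L : (V → ℝ) → ℝ) = fun ω => ∑ i, L (Pi.single i 1) * ω i := by
    ext ω
    conv_lhs => rw [← Finset.univ_sum_single ω]
    rw [map_sum]
    refine Finset.sum_congr rfl fun i _ => ?_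
    have : Pi.single i (ω i) = ω i • (Pi.single i 1 : V → ℝ) := by
      rw [← Pi.single_smul, smul_eq_mul, mul_one]
    rw [this, map_smul, smul_eq_mul, mul_comm]
  have hm := gauss_map hμ (fun i => L (Pi.single i 1))
  rw [← hL] at hm
  have hmeas : Measurable (L : (V → ℝ) → ℝ) := L.continuous.measurable
  have hint : ∫ ω, L ω ∂μ = 0 := by
    have := integral_map (μ := μ) hmeas.aemeasurable (f := fun y : ℝ => y) (by fun_prop)
    rw [← this, hm, integral_id_gaussianReal]
  have hvar : Var[L; μ] = (Real.toNNReal (∑ i, ∑ j, L (Pi.single i 1) * L (Pi.single j 1) * K i j)) := by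
    have := variance_map (μ := μ) (X := fun y : ℝ => y) (Y := L) (by fun_prop) hmeas.aemeasurable
    rw [show (L : (V → ℝ) → ℝ) = (fun y : ℝ => y) ∘ L from rfl, ← this, hm]
    exact variance_fun_id_gaussianReal
  rw [hint, hvar, hm, Real.toNNReal_coe]

lemma gauss_memLp {V : Type} [Fintype V] {K : V → V → ℝ} {μ : Measure (V → ℝ)}
    (hμ : IsGaussianField μ K) (i : V) : MemLp (fun ω : V → ℝ => ω i) 2 μ := by
  haveI := gauss_isGaussian hμ
  exact HasGaussianLaw.memLp_two ((IsGaussian.hasGaussianLaw_id (μ := μ)).map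
    (ContinuousLinearMap.proj (R := ℝ) (φ := fun _ : V => ℝ) i))

lemma gauss_mean {V : Type} [Fintype V] {K : V → V → ℝ} {μ : Measure (V → ℝ)}
    (hμ : IsGaussianField μ K) (c : V → ℝ) : ∫ ω, (∑ i, c i * ω i) ∂μ = 0 := by
  have hmeas : Measurable (fun ω : V → ℝ => ∑ i, c i * ω i) := by fun_prop
  have := integral_map (μ := μ) hmeas.aemeasurable (f := fun y : ℝ => y) (by fun_prop)
  rw [← this, gauss_map hμ, integral_id_gaussianReal]

lemma gauss_sq {V : Type} [Fintype V] {K : V → V → ℝ} {μ : Measure (V → ℝ)}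
    (hμ : IsGaussianField μ K) (hpsd : ∀ c : V → ℝ, 0 ≤ ∑ i, ∑ j, c i * c j * K i j)
    (c : V → ℝ) : ∫ ω, (∑ i, c i * ω i) ^ 2 ∂μ = ∑ i, ∑ j, c i * c j * K i j := by
  have hmeas : Measurable (fun ω : V → ℝ => ∑ i, c i * ω i) := by fun_prop
  have := integral_map (μ := μ) hmeas.aemeasurable (f := fun y : ℝ => y ^ 2) (by fun_prop)
  rw [← this, gauss_map hμ]
  have h2 : Var[fun y : ℝ => y; gaussianReal 0 (Real.toNNReal (∑ i, ∑ j, c i * c j * K i j))] = _ :=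
    variance_fun_id_gaussianReal
  rw [variance_of_integral_eq_zero (by fun_prop) integral_id_gaussianReal] at h2
  rw [h2]
  exact Real.coe_toNNReal _ (hpsd c)

lemma gauss_cov {V : Type} [Fintype V] {K : V → V → ℝ} {μ : Measure (V → ℝ)}
    (hμ : IsGaussianField μ K) (hpsd : ∀ c : V → ℝ, 0 ≤ ∑ i, ∑ j, c i * c j * K i j)
    (hsymm : ∀ i j, K i j = K j i) (i j : V) : ∫ ω, ω i * ω j ∂μ = K i j := by
  have hI : ∀ k l : V, Integrable (fun ω : V → ℝ => ω k * ω l) μ := fun k l =>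
    (gauss_memLp hμ k).integrable_mul (gauss_memLp hμ l)
  have hsingle : ∀ k : V, ∫ ω, ω k * ω k ∂μ = K k k := by
    intro k
    have := gauss_sq hμ hpsd (Pi.single k 1)
    simpa [Pi.single_apply, sq] using this
  have h := gauss_sq hμ hpsd (Pi.single i 1 + Pi.single j 1)
  simp only [Pi.add_apply, add_mul, mul_add, Finset.sum_add_distrib, Pi.single_apply, ite_mul, mul_ite, one_mul, zero_mul, mul_one, mul_zero,
    Finset.sum_ite_eq, Finset.sum_ite_eq', Finset.mem_univ, if_true] at h
  have e : ∀ ω : V → ℝ, (ω i + ω j) ^ 2 = (ω i * ω i + ω j * ω j) + 2 * (ω i * ω j) := fun ω => by ring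
  simp_rw [e] at h
  have hadd : Integrable (fun ω : V → ℝ => ω i * ω i + ω j * ω j) μ := (hI i i).add (hI j j)
  rw [integral_add hadd ((hI i j).const_mul 2), integral_add (hI i i) (hI j j),
    integral_const_mul, hsingle, hsingle] at h
  have := hsymm i j
  linarith

/-- sigma-algebra generated by the restriction to `A`. -/
abbrev sigA {V : Type} (A : Set V) : MeasurableSpace (V → ℝ) :=
  MeasurableSpace.comap (fun ω : V → ℝ => A.restrict ω) inferInstance

lemma gauss_cond {V : Type} [Fintype V] {K : V → V → ℝ} {μ : Measure (V → ℝ)}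
    (hμ : IsGaussianField μ K) (hpsd : ∀ c : V → ℝ, 0 ≤ ∑ i, ∑ j, c i * c j * K i j)
    (hsymm : ∀ i j, K i j = K j i) (A : Set V) (x : V) (b : V → ℝ) (hb : ∀ v, v ∉ A → b v = 0)
    (horth : ∀ a ∈ A, K x a = ∑ v, b v * K v a) :
    condExp (MeasurableSpace.comap (fun ω : V → ℝ => A.restrict ω) inferInstance) μ
      (fun ω => (ω x - condExp (MeasurableSpace.comap (fun ω : V → ℝ => A.restrict ω) inferInstance)
        μ (fun ω' => ω' x) ω) ^ 2) =ᵐ[μ] fun _ => K x x - ∑ v, b v * K v x := by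
  haveI := gauss_isGaussian hμ
  haveI : IsProbabilityMeasure μ := hμ.1
  change condExp (sigA A) μ (fun ω => (ω x - condExp (sigA A) μ (fun ω' => ω' x) ω) ^ 2) =ᵐ[μ] _
  have hI : ∀ k l : V, Integrable (fun ω : V → ℝ => ω k * ω l) μ := fun k l =>
    (gauss_memLp hμ k).integrable_mul (gauss_memLp hμ l)
  have hI1 : ∀ k : V, Integrable (fun ω : V → ℝ => ω k) μ := fun k =>
    (gauss_memLp hμ k).integrable (by norm_num)
  have hrestr : Measurable (fun ω : V → ℝ => A.restrict ω) := by
    exact measurable_pi_lambda _ fun a => measurable_pi_apply (a : V)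
  have hle : (sigA A) ≤ MeasurableSpace.pi := hrestr.comap_le
  set S : (V → ℝ) → ℝ := fun ω => ∑ v, b v * ω v with hS
  set R : (V → ℝ) → ℝ := fun ω => ω x - S ω with hR
  have hSI : Integrable S μ := integrable_finsetSum _ fun v _ => (hI1 v).const_mul _
  have hRI : Integrable R μ := (hI1 x).sub hSI
  have hRmeas : Measurable R := by
    change Measurable fun ω : V → ℝ => ω x - ∑ v, b v * ω v
    fun_prop
  have hRv : ∀ k, ∫ ω, R ω * ω k ∂μ = K x k - ∑ v, b v * K v k := by
    intro k
    have e : ∀ ω : V → ℝ, R ω * ω k = ω x * ω k - ∑ v, b v * (ω v * ω k) := by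
      intro ω
      simp only [hR, hS, sub_mul, Finset.sum_mul, mul_assoc]
    simp_rw [e]
    rw [integral_sub (hI x k) (integrable_finsetSum _ fun v _ => (hI v k).const_mul _),
      integral_finsetSum _ fun v _ => (hI v k).const_mul _]
    simp_rw [integral_const_mul, gauss_cov hμ hpsd hsymm]
  have hRmean : ∫ ω, R ω ∂μ = 0 := by
    rw [hR, integral_sub (hI1 x) hSI, hS, gauss_mean hμ b]
    have := gauss_mean hμ (Pi.single x 1)
    simp [Pi.single_apply] at this
    simp [this]
  -- independence
  have hindep : IndepFun R (fun ω : V → ℝ => A.restrict ω) μ := by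
    have hG : HasGaussianLaw (fun ω : V → ℝ => ((fun _ : Unit => R ω), (fun a : A => ω a))) μ := by
      let L : (V → ℝ) →L[ℝ] ((Unit → ℝ) × (A → ℝ)) :=
        ContinuousLinearMap.prod
          (ContinuousLinearMap.pi fun _ : Unit =>
            (ContinuousLinearMap.proj (R := ℝ) (φ := fun _ : V => ℝ) x -
              ∑ v, b v • ContinuousLinearMap.proj (R := ℝ) (φ := fun _ : V => ℝ) v))
          (ContinuousLinearMap.pi fun a : A =>
            ContinuousLinearMap.proj (R := ℝ) (φ := fun _ : V => ℝ) (a : V))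
      have h := (IsGaussian.hasGaussianLaw_id (μ := μ)).map L
      have e : (L ∘ id : (V → ℝ) → _) = (fun ω : V → ℝ => ((fun _ : Unit => R ω), (fun a : A => ω a))) := by
        ext ω u
        · simp [L, hR, hS]
        · simp [L]
      rwa [e] at h
    have h := HasGaussianLaw.indepFun_of_covariance_eval (X := fun (_ : Unit) => R)
      (Y := fun (a : A) (ω : V → ℝ) => ω a) hG ?_
    · exact h.comp (φ := fun f : Unit → ℝ => f ()) (ψ := id) (measurable_pi_apply _) measurable_id
    · intro _ a
      have hR2 : MemLp R 2 μ := (gauss_memLp hμ x).sub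
        (memLp_finsetSum _ fun v _ => (gauss_memLp hμ v).const_mul (b v))
      rw [covariance_eq_sub hR2 (gauss_memLp hμ a), hRmean, zero_mul, sub_zero]
      have := hRv a
      rw [← horth a a.2, sub_self] at this
      exact this
  have hindep' : Indep (MeasurableSpace.comap R inferInstance) (sigA A) μ := hindep
  have hSmeas : StronglyMeasurable[sigA A] S := by
    apply Measurable.stronglyMeasurable
    refine Finset.measurable_fun_sum _ fun v _ => ?_
    by_cases hv : v ∈ A
    · exact Measurable.const_mul ((measurable_pi_apply (⟨v, hv⟩ : A)).comp
        (comap_measurable (fun ω : V → ℝ => A.restrict ω))) _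
    · simp only [hb v hv, zero_mul]
      exact measurable_const
  have hc1 : condExp (sigA A) μ (fun ω' => ω' x) =ᵐ[μ] S := by
    have e : (fun ω' : V → ℝ => ω' x) = R + S := by
      ext ω; simp [hR]
    rw [e]
    have h1 := condExp_add hRI hSI (sigA A)
    have h2 : condExp (sigA A) μ R =ᵐ[μ] fun _ => μ[R] :=
      condExp_indep_eq hRmeas.comap_le hle (comap_measurable R).stronglyMeasurable hindep'
    have h3 : condExp (sigA A) μ S = S := condExp_of_stronglyMeasurable hle hSmeas hSI
    filter_upwards [h1, h2] with ω h1 h2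
    rw [h1, Pi.add_apply, h2, h3, hRmean, zero_add]
  have hc2 : (fun ω : V → ℝ => (ω x - condExp (sigA A) μ (fun ω' => ω' x) ω) ^ 2) =ᵐ[μ] fun ω => R ω ^ 2 := by
    filter_upwards [hc1] with ω h
    rw [h]
  refine (condExp_congr_ae hc2).trans ?_
  have h4 : condExp (sigA A) μ (fun ω => R ω ^ 2) =ᵐ[μ] fun _ => μ[fun ω => R ω ^ 2] :=
    condExp_indep_eq hRmeas.comap_le hle
      ((comap_measurable R).pow_const 2).stronglyMeasurable hindep'
  refine h4.trans (Eventually.of_forall fun _ => ?_)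
  change ∫ ω, R ω ^ 2 ∂μ = _
  have hRRI : ∀ k, Integrable (fun ω => R ω * ω k) μ := by
    intro k
    have e : ∀ ω : V → ℝ, R ω * ω k = ω x * ω k - ∑ v, b v * (ω v * ω k) := by
      intro ω
      simp only [hR, hS, sub_mul, Finset.sum_mul, mul_assoc]
    simp_rw [e]
    exact (hI x k).sub (integrable_finsetSum _ fun v _ => (hI v k).const_mul _)
  have e : ∀ ω : V → ℝ, R ω ^ 2 = R ω * ω x - ∑ v, b v * (R ω * ω v) := by
    intro ω
    have : ∑ v, b v * (R ω * ω v) = R ω * S ω := by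
      simp only [hS, Finset.mul_sum]
      exact Finset.sum_congr rfl fun v _ => by ring
    rw [this, sq, ← mul_sub]
  simp_rw [e]
  rw [integral_sub (hRRI x) (integrable_finsetSum _ fun v _ => (hRRI v).const_mul _),
    integral_finsetSum _ fun v _ => (hRRI v).const_mul _, hRv x]
  simp_rw [integral_const_mul]
  have h0 : ∑ v, b v * ∫ ω, R ω * ω v ∂μ = 0 := by
    refine Finset.sum_eq_zero fun v _ => ?_
    by_cases hv : v ∈ A
    · rw [hRv v, ← horth v hv, sub_self, mul_zero]
    · rw [hb v hv, zero_mul]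
  rw [h0, sub_zero]

end GFF
/-- conditional variance of the zero-average GFF given its values on `A`. -/
theorem gff_conditional_variance
    (d : ℕ) (hd : 3 ≤ d)
    (V : Type) [Fintype V] [MeasurableSpace V]
    (G : SimpleGraph V) (hconn : G.Connected) (hreg : GFF.IsReg G d)
    (μ : Measure (V → ℝ)) (hμ : GFF.IsGaussianField μ (GFF.zGreen G d (Fintype.card V)))
    (W : V → Measure (ℕ → V)) (hW : GFF.IsSRW G d W)
    (A : Set V) (hA : A.Nonempty) (hAne : A ≠ Set.univ) (x : V)
    (mA : MeasurableSpace (V → ℝ))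
    (hmA : mA = MeasurableSpace.comap (fun ω : V → ℝ => A.restrict ω) inferInstance) :
    condExp mA μ (fun ω => (ω x - condExp mA μ (fun ω' => ω' x) ω) ^ 2) =ᵐ[μ]
      fun _ =>
        GFF.zGreen G d (Fintype.card V) x x -
          (∫ p, GFF.zGreen G d (Fintype.card V) (GFF.stopAt A p) x ∂ W x) +
          ((∫ p, ((GFF.hitTime A p).toNat : ℝ) ∂ W x) /
              ((Fintype.card V : ℝ)⁻¹ *
                ∑ z : V, ∫ p, ((GFF.hitTime A p).toNat : ℝ) ∂ W z)) *
            ((Fintype.card V : ℝ)⁻¹ *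
              ∑ z : V, ∫ p, GFF.zGreen G d (Fintype.card V) (GFF.stopAt A p) x ∂ W z) := by
  subst hmA
  haveI : Nonempty V := ⟨x⟩
  haveI := GFF.srw_discrete hW
  obtain ⟨gsymm, gsum, gpois, gpsd⟩ := GFF.green_facts hd hreg hconn
  set K := GFF.zGreen G d (Fintype.card V) with hK
  have hN : 0 < (Fintype.card V : ℝ) := by exact_mod_cast Fintype.card_pos
  have hc : 0 < (Fintype.card V : ℝ)⁻¹ := inv_pos.2 hN
  set c : ℝ := (Fintype.card V : ℝ)⁻¹ with hcdef
  have hh : ∀ a ∈ A, ∀ z, z ∉ A → ∑ v, GFF.transP G d z v * K v a = K z a + c := by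
    intro a ha z hz
    have h1 := gpois z a
    rw [if_neg (fun h : z = a => hz (h ▸ ha))] at h1
    linarith
  obtain ⟨a₀, ha₀⟩ := hA
  obtain ⟨z₀, hz₀⟩ := (Set.ne_univ_iff_exists_notMem A).1 hAne
  have hs : ∀ z, Summable fun k => (W z).real (GFF.Dn A k) := fun z =>
    GFF.summable_D hW A z (fun v => K v a₀) c hc (hh a₀ ha₀)
  set H : V → ℝ := fun z => ∫ p, ((GFF.hitTime A p).toNat : ℝ) ∂ W z with hH
  have hHz : ∀ z, HasSum (fun k => (W z).real (GFF.Dn A k)) (H z) := fun z =>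
    GFF.hit_mean hW A z (hs z)
  have hH0 : ∀ z, 0 ≤ H z := fun z => (hHz z).nonneg fun _ => measureReal_nonneg
  have hHpos : 0 < H z₀ := by
    haveI := hW.1 z₀
    have h1 : (W z₀).real (GFF.Dn A 0) ≤ H z₀ :=
      le_hasSum (hHz z₀) 0 fun _ _ => measureReal_nonneg
    have h2 : (W z₀).real (GFF.Dn A 0) = 1 := by
      have h3 : W z₀ (GFF.Dn A 0) = 1 := by
        rw [← mem_ae_iff_prob_eq_one (GFF.meas_Dn A 0)]
        filter_upwards [GFF.start hW z₀] with p hp i hi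
        obtain rfl : i = 0 := by omega
        rw [hp]; exact hz₀
      rw [measureReal_def, h3]; simp
    linarith
  have hHsum : 0 < ∑ z, H z :=
    Finset.sum_pos' (fun z _ => hH0 z) ⟨z₀, Finset.mem_univ _, hHpos⟩
  set q : V → V → ℝ := fun z v => (W z).real {p | GFF.stopAt A p = v} with hq
  have hint : ∀ (z : V) (f : V → ℝ), ∫ p, f (GFF.stopAt A p) ∂ W z = ∑ v, q z v * f v := by
    intro z f
    haveI := hW.1 z
    exact GFF.integral_comp_finite (W z) (GFF.stopAt A) (GFF.meas_stopAt A) f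
  have hq0 : ∀ z v, v ∉ A → q z v = 0 := by
    intro z v hv
    haveI := hW.1 z
    rw [hq, measureReal_eq_zero_iff]
    have h1 := GFF.hit_ae hW A z (hs z)
    refine measure_mono_null (fun p hp => ?_) h1
    intro htop
    apply hv
    rw [← show GFF.stopAt A p = v from hp]
    exact GFF.hit_mem A p htop
  have hqK : ∀ a ∈ A, ∀ z, ∑ v, q z v * K v a = K z a + c * H z := by
    intro a ha z
    rw [← hint z (fun v => K v a)]
    exact GFF.stop_mean hW A z (fun v => K v a) c hc (hh a ha)
  set r : ℝ := H x / (c * ∑ z, H z) with hr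
  have hrc : r * (c * ∑ z, H z) = H x := div_mul_cancel₀ _ (mul_pos hc hHsum).ne'
  have hexp : ∀ a, ∑ v, (q x v - r * (c * ∑ z, q z v)) * K v a =
      ∑ v, q x v * K v a - r * (c * ∑ z, ∑ v, q z v * K v a) := by
    intro a
    rw [Finset.sum_comm]
    simp only [sub_mul, Finset.sum_sub_distrib, Finset.mul_sum, Finset.sum_mul]
    congr 1
    exact Finset.sum_congr rfl fun v _ => Finset.sum_congr rfl fun z _ => by ring
  have key := GFF.gauss_cond hμ gpsd gsymm A x (fun v => q x v - r * (c * ∑ z, q z v))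
    (fun v hv => by simp [hq0 _ v hv]) (fun a ha => by
      rw [hexp a, hqK a ha x]
      simp only [hqK a ha]
      rw [Finset.sum_add_distrib, gsum a, ← Finset.mul_sum, zero_add]
      have : r * (c * (c * ∑ z, H z)) = c * H x := by rw [← hrc]; ring
      rw [this]; ring)
  refine key.trans (Eventually.of_forall fun _ => ?_)
  simp only
  rw [hexp x]
  simp only [hint _ (fun v => K v x)]
  ring
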